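/- arXiv:2511.02048 — 4 statements merged into one kernel-verified Lean document; each statement's English description precedes it below -/
import Mathlib

section
/- For every n ∈ ℕ, every function f : {0,1}^n → ℝ, every value function V for f, every k ∈ {1,…,n}, and every ξ ∈ B_{n,k}, the inequality Δ̄(k; f, ξ) ≤ Δ̄(k−1; f, ξ) + Δ̄(k−1; f, ξ + e^k) + δ̄(k; f, ξ) holds. -/
/-!
Splitting the vectors that agree with `ξ` beyond coordinate `k` according to their `k`-th
coordinate gives the Bellman recursion `V*_k(ξ) = max (V*_{k-1}(ξ)) (V*_{k-1}(ξ + e^k))`.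
Since `max` is 1-Lipschitz for the sup distance, replacing both values of `V*_{k-1}` by those of
`V_{k-1}` costs at most the larger, hence at most the sum, of the two errors; the triangle
inequality then adds `δ̄(k)`.
-/

/-- `Vstar n f k ξ` is the optimal value `V*_k(ξ; f)`: the maximum of `f` over all
vectors agreeing with `ξ` on (0-indexed) positions `≥ k`. -/
noncomputable def Vstar (n : ℕ) (f : (Fin n → Bool) → ℝ) (k : ℕ) (ξ : Fin n → Bool) : ℝ :=
  (Finset.univ.filter (fun η : Fin n → Bool => ∀ j : Fin n, k ≤ j.val → η j = ξ j)).sup'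
    ⟨ξ, by simp⟩ f

/-- `upd n ξ p` is `ξ + e^{p+1}`, i.e. `ξ` with the (0-indexed) position `p` set to `1`. -/
def upd (n : ℕ) (ξ : Fin n → Bool) (p : ℕ) : Fin n → Bool :=
  fun j => if j.val = p then true else ξ j

theorem abs_max_sub_le_add_add {α : Type*} [AddCommGroup α] [LinearOrder α]
    [IsOrderedAddMonoid α] (a b a' b' c : α) :
    |max a b - c| ≤ |a - a'| + |b - b'| + |max a' b' - c| :=
  calc |max a b - c|
      ≤ |max a b - max a' b'| + |max a' b' - c| := abs_sub_le _ _ _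
    _ ≤ max |a - a'| |b - b'| + |max a' b' - c| := by
        gcongr
        exact abs_max_sub_max_le_max a b a' b'
    _ ≤ |a - a'| + |b - b'| + |max a' b' - c| := by
        gcongr
        exact max_le_add_of_nonneg (abs_nonneg _) (abs_nonneg _)

section AgreeFrom

variable {n : ℕ} {α : Type*} [Fintype α] [DecidableEq α]

/-- The set of vectors that agree with `ξ` on the (0-indexed) positions `≥ k`, over which
`Vstar n f k ξ` maximizes `f`. The alphabet `α` is arbitrary; `Vstar` is the case `α = Bool`. -/
def agreeFrom (k : ℕ) (ξ : Fin n → α) : Finset (Fin n → α) :=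
  Finset.univ.filter fun η => ∀ j : Fin n, k ≤ j.val → η j = ξ j

theorem mem_agreeFrom {k : ℕ} {ξ η : Fin n → α} :
    η ∈ agreeFrom k ξ ↔ ∀ j : Fin n, k ≤ j.val → η j = ξ j := by
  simp only [agreeFrom, Finset.mem_filter, Finset.mem_univ, true_and]

theorem agreeFrom_nonempty (k : ℕ) (ξ : Fin n → α) : (agreeFrom k ξ).Nonempty :=
  ⟨ξ, mem_agreeFrom.2 fun _ _ => rfl⟩

theorem mem_agreeFrom_update {p : Fin n} {b : α} {ξ η : Fin n → α} :
    η ∈ agreeFrom p (Function.update ξ p b) ↔ η p = b ∧ η ∈ agreeFrom (p + 1) ξ := by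
  simp only [mem_agreeFrom, Nat.succ_le_iff, Fin.val_fin_le, Fin.val_fin_lt]
  constructor
  · intro h
    exact ⟨by simpa using h p le_rfl, fun j hj => by simpa [hj.ne'] using h j hj.le⟩
  · rintro ⟨hp, h⟩ j hj
    obtain rfl | hlt := hj.eq_or_lt
    · simpa using hp
    · simpa [hlt.ne'] using h j hlt

end AgreeFrom

theorem agreeFrom_succ {n : ℕ} (p : Fin n) (ξ : Fin n → Bool) :
    agreeFrom (p + 1) ξ =
      agreeFrom p (Function.update ξ p false) ∪ agreeFrom p (Function.update ξ p true) := by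
  ext η
  simp only [Finset.mem_union, mem_agreeFrom_update, ← or_and_right,
    Bool.eq_false_or_eq_true_self, true_and]

theorem Vstar_succ {n : ℕ} (f : (Fin n → Bool) → ℝ) (p : Fin n) (ξ : Fin n → Bool) :
    Vstar n f (p + 1) ξ =
      max (Vstar n f p (Function.update ξ p false)) (Vstar n f p (Function.update ξ p true)) := by
  have Vstar_eq_sup' (k : ℕ) (ζ : Fin n → Bool) :
      Vstar n f k ζ = (agreeFrom k ζ).sup' (agreeFrom_nonempty k ζ) f := rfl
  simp only [Vstar_eq_sup', agreeFrom_succ]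
  exact Finset.sup'_union (agreeFrom_nonempty _ _) (agreeFrom_nonempty _ _) f

theorem upd_eq_update {n : ℕ} (ξ : Fin n → Bool) (p : Fin n) :
    upd n ξ p = Function.update ξ p true := by
  ext j
  simp only [upd, Function.update_apply, Fin.ext_iff]

theorem Delta_le_Delta_add_Delta_add_delta_general {n : ℕ} (f : (Fin n → Bool) → ℝ)
    (V : ℕ → (Fin n → Bool) → ℝ) (p : Fin n) (ξ : Fin n → Bool) :
    let ξ₀ := Function.update ξ p false
    let ξ₁ := Function.update ξ p true
    |Vstar n f (p + 1) ξ - V (p + 1) ξ| ≤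
      |Vstar n f p ξ₀ - V p ξ₀| + |Vstar n f p ξ₁ - V p ξ₁| +
        |max (V p ξ₀) (V p ξ₁) - V (p + 1) ξ| := by
  intro ξ₀ ξ₁
  rw [Vstar_succ]
  exact abs_max_sub_le_add_add _ _ _ _ _

/-- For every `n`, every `f : {0,1}^n → ℝ`, every value function `V`
for `f` (i.e. `V_0(·; f) = f`), every `k ∈ {1,…,n}` and `ξ ∈ B_{n,k}`,
`Δ̄(k; f, ξ) ≤ Δ̄(k−1; f, ξ) + Δ̄(k−1; f, ξ + e^k) + δ̄(k; f, ξ)`. -/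
theorem Delta_le_Delta_add_Delta_add_delta (n : ℕ) (f : (Fin n → Bool) → ℝ)
    (V : ℕ → (Fin n → Bool) → ℝ) (hV0 : ∀ ξ, V 0 ξ = f ξ)
    (k : ℕ) (hk1 : 1 ≤ k) (hk2 : k ≤ n)
    (ξ : Fin n → Bool) (hξ : ∀ j : Fin n, j.val < k → ξ j = false) :
    |Vstar n f k ξ - V k ξ| ≤
      |Vstar n f (k - 1) ξ - V (k - 1) ξ| +
      |Vstar n f (k - 1) (upd n ξ (k - 1)) - V (k - 1) (upd n ξ (k - 1))| +
      |max (V (k - 1) ξ) (V (k - 1) (upd n ξ (k - 1))) - V k ξ| := by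
  obtain ⟨p, rfl⟩ : ∃ p : Fin n, k = p + 1 :=
    ⟨⟨k - 1, by omega⟩, (Nat.sub_add_cancel hk1).symm⟩
  have update_false : Function.update ξ p false = ξ :=
    Function.update_eq_self_iff.2 (hξ p p.val.lt_succ_self).symm
  simpa only [Nat.add_sub_cancel, upd_eq_update, update_false] using
    Delta_le_Delta_add_Delta_add_delta_general f V p ξ
end

section
/- For every n ∈ ℕ, every function f : {0,1}^n → ℝ, every value function V for f, every k ∈ {1,…,n}, and every η ∈ B_{n,k}, the inequality Δ̄(k; f, η) ≤ Σ_{ℓ=1}^{k} Σ_{ξ ∈ Ξ_ℓ(η,k)} δ̄(ℓ; f, ξ) holds. -/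
/-- The feasible set of the maximum `V*_k(ξ; f)`: the first `k` coordinates are free and the
remaining ones are those of `ξ`. With `B_{n,ℓ}` it also describes `Ξ_ℓ(η, k)`, which is
`B_{n,ℓ} ∩ completions k η`. -/
def completions {n : ℕ} (k : ℕ) (ξ : Fin n → Bool) : Finset (Fin n → Bool) :=
  Finset.univ.filter fun ζ => ∀ j : Fin n, k ≤ j.val → ζ j = ξ j

section Completions

variable {n k : ℕ}

theorem mem_completions {ξ ζ : Fin n → Bool} :
    ζ ∈ completions k ξ ↔ ∀ j : Fin n, k ≤ j.val → ζ j = ξ j := by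
  simp [completions]

theorem self_mem_completions (k : ℕ) (ξ : Fin n → Bool) : ξ ∈ completions k ξ :=
  mem_completions.2 fun _ _ => rfl

theorem completions_nonempty (k : ℕ) (ξ : Fin n → Bool) : (completions k ξ).Nonempty :=
  ⟨ξ, self_mem_completions k ξ⟩

theorem completions_zero (ξ : Fin n → Bool) : completions 0 ξ = {ξ} := by
  ext ζ
  simp [mem_completions, funext_iff]

theorem completions_subset {i : ℕ} {ξ ζ : Fin n → Bool} (hik : i ≤ k) (hζ : ζ ∈ completions k ξ) :
    completions i ζ ⊆ completions k ξ := fun _ hx =>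
  mem_completions.2 fun j hj =>
    (mem_completions.1 hx j (hik.trans hj)).trans (mem_completions.1 hζ j hj)

theorem upd_apply_of_ne (ξ : Fin n → Bool) {j : Fin n} (hj : j.val ≠ k) : upd n ξ k j = ξ j :=
  if_neg hj

theorem upd_mem_completions_succ (k : ℕ) (ξ : Fin n → Bool) :
    upd n ξ k ∈ completions (k + 1) ξ :=
  mem_completions.2 fun _ hj => upd_apply_of_ne ξ (Nat.lt_of_succ_le hj).ne'

theorem completions_succ {ξ : Fin n → Bool} (hξ : ∀ j : Fin n, j.val = k → ξ j = false) :
    completions (k + 1) ξ = completions k ξ ∪ completions k (upd n ξ k) := by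
  refine Finset.Subset.antisymm (fun ζ hζ => Finset.mem_union.2 ?_) <|
    Finset.union_subset (completions_subset k.le_succ (self_mem_completions _ ξ))
      (completions_subset k.le_succ (upd_mem_completions_succ k ξ))
  simp only [mem_completions] at hζ ⊢
  by_cases hk : ∀ j : Fin n, j.val = k → ζ j = false
  · left
    intro j hj
    rcases hj.eq_or_lt with hj | hj
    · rw [hk j hj.symm, hξ j hj.symm]
    · exact hζ j hj
  · right
    intro j hj
    rcases hj.eq_or_lt with rfl | hj
    · simpa [upd, ← Fin.ext_iff] using hk
    · rw [hζ j hj, upd_apply_of_ne ξ hj.ne']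

theorem sup'_completions_succ {α : Type*} [SemilatticeSup α] (f : (Fin n → Bool) → α)
    {ξ : Fin n → Bool} (hξ : ∀ j : Fin n, j.val = k → ξ j = false) :
    (completions (k + 1) ξ).sup' (completions_nonempty (k + 1) ξ) f =
      (completions k ξ).sup' (completions_nonempty k ξ) f ⊔
        (completions k (upd n ξ k)).sup' (completions_nonempty k (upd n ξ k)) f := by
  simp only [completions_succ hξ]
  exact Finset.sup'_union _ _ f

theorem Vstar_eq_sup'_completions (f : (Fin n → Bool) → ℝ) (k : ℕ) (ξ : Fin n → Bool) :
    Vstar n f k ξ = (completions k ξ).sup' (completions_nonempty k ξ) f :=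
  rfl

end Completions

theorem Delta_le_sum_delta_general {G : Type*} [AddCommGroup G] [LinearOrder G]
    [IsOrderedAddMonoid G] {n : ℕ} {f : (Fin n → Bool) → G} {V : ℕ → (Fin n → Bool) → G}
    (hV0 : ∀ ξ, V 0 ξ = f ξ) (ε : ℕ → G) {k : ℕ} {η : Fin n → Bool}
    (hη : ∀ j : Fin n, j.val < k → η j = false)
    (hε : ∀ ℓ ∈ Finset.Icc 1 k, ∀ ξ ∈ completions k η, (∀ j : Fin n, j.val < ℓ → ξ j = false) →
      |max (V (ℓ - 1) ξ) (V (ℓ - 1) (upd n ξ (ℓ - 1))) - V ℓ ξ| ≤ ε ℓ) :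
    |(completions k η).sup' (completions_nonempty k η) f - V k η| ≤
      ∑ ℓ ∈ Finset.Icc 1 k, ε ℓ := by
  induction k generalizing η with
  | zero => simp [completions_zero, hV0]
  | succ k ih =>
    have bound_of_mem {ζ : Fin n → Bool} (hζ : ζ ∈ completions (k + 1) η)
        (hζ0 : ∀ j : Fin n, j.val < k → ζ j = false) :
        |(completions k ζ).sup' (completions_nonempty k ζ) f - V k ζ| ≤
          ∑ ℓ ∈ Finset.Icc 1 k, ε ℓ :=
      ih hζ0 fun ℓ hℓ ξ hξ => hε ℓ (Finset.Icc_subset_Icc_right k.le_succ hℓ) ξ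
        (completions_subset k.le_succ hζ hξ)
    have bound_zero := bound_of_mem (self_mem_completions _ η) fun j hj => hη j (by omega)
    have bound_one := bound_of_mem (upd_mem_completions_succ k η) fun j hj =>
      (upd_apply_of_ne η hj.ne).trans (hη j (by omega))
    have last_step : |max (V k η) (V k (upd n η k)) - V (k + 1) η| ≤ ε (k + 1) :=
      hε (k + 1) (by simp) η (self_mem_completions _ η) hη
    rw [sup'_completions_succ f fun j hj => hη j (by omega),
      Finset.sum_Icc_succ_top (Nat.le_add_left 1 k)]
    exact (abs_sub_le _ (max (V k η) (V k (upd n η k))) _).trans <| add_le_add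
      ((abs_max_sub_max_le_max _ _ _ _).trans (max_le bound_zero bound_one)) last_step

/-- For every `n`, `f : {0,1}^n → ℝ`, value function `V` for `f`,
`k ∈ {1,…,n}` and `η ∈ B_{n,k}`,
`Δ̄(k; f, η) ≤ Σ_{ℓ=1}^{k} Σ_{ξ ∈ Ξ_ℓ(η,k)} δ̄(ℓ; f, ξ)`, where
`Ξ_ℓ(η,k) = {ξ ∈ B_{n,ℓ} : ξ_j = η_j for j = k+1,…,n}`. -/
theorem Delta_le_sum_delta (n : ℕ) (f : (Fin n → Bool) → ℝ)
    (V : ℕ → (Fin n → Bool) → ℝ) (hV0 : ∀ ξ, V 0 ξ = f ξ)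
    (k : ℕ) (hk1 : 1 ≤ k) (hk2 : k ≤ n)
    (η : Fin n → Bool) (hη : ∀ j : Fin n, j.val < k → η j = false) :
    |Vstar n f k η - V k η| ≤
      ∑ ℓ ∈ Finset.Icc 1 k,
        ∑ ξ ∈ Finset.univ.filter (fun ξ : Fin n → Bool =>
            (∀ j : Fin n, j.val < ℓ → ξ j = false) ∧ (∀ j : Fin n, k ≤ j.val → ξ j = η j)),
          |max (V (ℓ - 1) ξ) (V (ℓ - 1) (upd n ξ (ℓ - 1))) - V ℓ ξ| := by
  rw [Vstar_eq_sup'_completions]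
  exact Delta_le_sum_delta_general hV0 _ hη fun ℓ _ ξ hξ hξ0 => Finset.single_le_sum
    (f := fun ξ => |max (V (ℓ - 1) ξ) (V (ℓ - 1) (upd n ξ (ℓ - 1))) - V ℓ ξ|)
    (fun _ _ => abs_nonneg _) (by simpa using ⟨hξ0, mem_completions.1 hξ⟩)
end

section
/- Let i = (c, a, b) be a knapsack instance of dimension n with a_1,…,a_n > 0, let k ∈ {1,…,n}, and let ξ = (0,…,0, ξ_{k+1},…,ξ_n) ∈ {0,1}^n satisfy Σ_{j=k+1}^n a_j ξ_j ≤ b. Then V*(k; i, ξ) = max{ V*(k−1; i, ξ), c_k + V*(k−1; i, ξ + e^k) } if b ≥ a_k + Σ_{j=k+1}^n a_j ξ_j, and V*(k; i, ξ) = V*(k−1; i, ξ) otherwise, where e^k ∈ {0,1}^n is the unit vector with 1 in the k-th position. -/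
/-- `headSum n k a x = Σ_{j=1}^{k} a_j x_j` (0-indexed positions `< k`). -/
def headSum (n k : ℕ) (a : Fin n → ℝ) (x : Fin n → Bool) : ℝ :=
  ∑ j ∈ Finset.univ.filter (fun j : Fin n => j.val < k), if x j then a j else 0

/-- `tailSum n k a ξ = Σ_{j=k+1}^{n} a_j ξ_j` (0-indexed positions `≥ k`). -/
def tailSum (n k : ℕ) (a : Fin n → ℝ) (ξ : Fin n → Bool) : ℝ :=
  ∑ j ∈ Finset.univ.filter (fun j : Fin n => k ≤ j.val), if ξ j then a j else 0

/-- `knapSubVal n c a b k ξ` is `V*(k; i, ξ)` for the knapsack instance `i = (c,a,b)`: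
the maximum of `Σ_{j=1}^k c_j x_j` over `(x_1,…,x_k) ∈ {0,1}^k` subject to
`Σ_{j=1}^k a_j x_j ≤ b − Σ_{j=k+1}^n a_j ξ_j` (and `V*(0; i, ξ) = 0`). -/
noncomputable def knapSubVal (n : ℕ) (c a : Fin n → ℝ) (b : ℝ) (k : ℕ) (ξ : Fin n → Bool) : ℝ :=
  sSup {v | ∃ x : Fin n → Bool,
    headSum n k a x ≤ b - tailSum n k a ξ ∧ v = headSum n k c x}

section Sums

variable {n : ℕ} (a : Fin n → ℝ) (x : Fin n → Bool) (k : Fin n)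

lemma headSum_succ :
    headSum n (k + 1) a x = (if x k then a k else 0) + headSum n k a x := by
  have hinsert : Finset.univ.filter (fun j : Fin n => j.val < k + 1) =
      insert k (Finset.univ.filter fun j : Fin n => j.val < k) := by
    ext j
    simp only [Finset.mem_filter, Finset.mem_univ, true_and, Finset.mem_insert, Fin.ext_iff]
    omega
  rw [headSum, hinsert, Finset.sum_insert (by simp), headSum]

lemma tailSum_eq_add_tailSum_succ :
    tailSum n k a x = (if x k then a k else 0) + tailSum n (k + 1) a x := by
  have hinsert : Finset.univ.filter (fun j : Fin n => k ≤ j.val) =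
      insert k (Finset.univ.filter fun j : Fin n => k + 1 ≤ j.val) := by
    ext j
    simp only [Finset.mem_filter, Finset.mem_univ, true_and, Finset.mem_insert, Fin.ext_iff]
    omega
  rw [tailSum, hinsert, Finset.sum_insert (by simp), tailSum]

lemma headSum_update (t : Bool) : headSum n k a (Function.update x k t) = headSum n k a x := by
  refine Finset.sum_congr rfl fun j hj => ?_
  rw [Function.update_of_ne (Fin.ne_of_lt (Finset.mem_filter.mp hj).2)]

lemma tailSum_succ_update (t : Bool) :
    tailSum n (k + 1) a (Function.update x k t) = tailSum n (k + 1) a x := by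
  refine Finset.sum_congr rfl fun j hj => ?_
  rw [Function.update_of_ne (Fin.ne_of_gt (Finset.mem_filter.mp hj).2)]

lemma headSum_succ_update (t : Bool) :
    headSum n (k + 1) a (Function.update x k t) = (if t then a k else 0) + headSum n k a x := by
  rw [headSum_succ, Function.update_self, headSum_update]

lemma upd_eq_update_s7 : upd n x k = Function.update x k true := by
  ext j
  simp only [upd, Function.update_apply, Fin.ext_iff]

lemma tailSum_upd : tailSum n k a (upd n x k) = a k + tailSum n (k + 1) a x := by
  rw [upd_eq_update_s7, tailSum_eq_add_tailSum_succ, Function.update_self, if_pos rfl,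
    tailSum_succ_update]

variable {x k} in
lemma tailSum_eq_tailSum_succ (hx : x k = false) : tailSum n k a x = tailSum n (k + 1) a x := by
  simp [tailSum_eq_add_tailSum_succ, hx]

variable {a} in
lemma headSum_nonneg {m : ℕ} (ha : ∀ j : Fin n, j.val < m → 0 ≤ a j) : 0 ≤ headSum n m a x := by
  refine Finset.sum_nonneg fun j hj => ?_
  split_ifs
  exacts [ha j (Finset.mem_filter.mp hj).2, le_rfl]

end Sums

/-- The values `Σ_{j≤k} c_j x_j` of the selections `x` of the first `k` items whose weight
`Σ_{j≤k} a_j x_j` is at most the capacity `r`; `V*(k; i, ξ)` is the maximum of this set for the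
residual capacity `r` left by `ξ`. As in `knapSubVal`, selections are vectors in `{0,1}^n` of which
only the first `k` coordinates matter. -/
def attainableValues {n : ℕ} (c a : Fin n → ℝ) (k : ℕ) (r : ℝ) : Set ℝ :=
  headSum n k c '' {x | headSum n k a x ≤ r}

section AttainableValues

variable {n : ℕ} (c a : Fin n → ℝ)

lemma knapSubVal_eq_sSup_attainableValues (b : ℝ) (k : ℕ) (ξ : Fin n → Bool) :
    knapSubVal n c a b k ξ = sSup (attainableValues c a k (b - tailSum n k a ξ)) := by
  simp only [knapSubVal, attainableValues, Set.image, Set.mem_ofPred_eq, eq_comm]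

lemma attainableValues_finite (k : ℕ) (r : ℝ) : (attainableValues c a k r).Finite :=
  (Set.toFinite _).image _

lemma attainableValues_nonempty (k : ℕ) {r : ℝ} (hr : 0 ≤ r) :
    (attainableValues c a k r).Nonempty :=
  ⟨_, fun _ => false, by simpa [headSum] using hr, rfl⟩

lemma attainableValues_eq_empty {a : Fin n → ℝ} {k : ℕ} {r : ℝ}
    (ha : ∀ j : Fin n, j.val < k → 0 ≤ a j) (hr : r < 0) : attainableValues c a k r = ∅ :=
  Set.image_eq_empty.mpr <| Set.eq_empty_of_forall_notMem fun x hx =>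
    (hr.trans_le (headSum_nonneg x ha)).not_ge hx

lemma attainableValues_succ (k : Fin n) (r : ℝ) :
    attainableValues c a (k + 1) r =
      attainableValues c a k r ∪ (c k + ·) '' attainableValues c a k (r - a k) := by
  apply Set.Subset.antisymm
  · rintro _ ⟨x, hx : headSum n (k + 1) a x ≤ r, rfl⟩
    rw [headSum_succ] at hx ⊢
    cases hxk : x k with
    | false =>
      simp only [hxk, Bool.false_eq_true, if_false, zero_add] at hx ⊢
      exact .inl ⟨x, hx, rfl⟩
    | true =>
      simp only [hxk, if_true] at hx ⊢
      exact .inr ⟨_, ⟨x, le_sub_iff_add_le'.mpr hx, rfl⟩, rfl⟩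
  · rintro _ (⟨x, hx, rfl⟩ | ⟨_, ⟨x, hx, rfl⟩, rfl⟩)
    · refine ⟨Function.update x k false, ?_, ?_⟩
      · simpa [headSum_succ_update] using hx
      · simp [headSum_succ_update]
    · refine ⟨Function.update x k true, ?_, ?_⟩
      · simpa [headSum_succ_update] using le_sub_iff_add_le'.mp hx
      · simp [headSum_succ_update]

lemma attainableValues_succ_of_lt {a : Fin n → ℝ} {k : Fin n} {r : ℝ}
    (ha : ∀ j < k, 0 ≤ a j) (hr : r < a k) :
    attainableValues c a (k + 1) r = attainableValues c a k r := by
  rw [attainableValues_succ, attainableValues_eq_empty c ha (sub_neg.mpr hr), Set.image_empty,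
    Set.union_empty]

lemma isGreatest_sSup_attainableValues (k : ℕ) {r : ℝ} (hr : 0 ≤ r) :
    IsGreatest (attainableValues c a k r) (sSup (attainableValues c a k r)) :=
  have hfin := attainableValues_finite c a k r
  ⟨(attainableValues_nonempty c a k hr).csSup_mem hfin, fun _ hv => le_csSup hfin.bddAbove hv⟩

lemma sSup_attainableValues_succ_of_le {a : Fin n → ℝ} {k : Fin n} {r : ℝ}
    (hr : 0 ≤ r) (hk : a k ≤ r) :
    sSup (attainableValues c a (k + 1) r) =
      max (sSup (attainableValues c a k r)) (c k + sSup (attainableValues c a k (r - a k))) := by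
  have hskip := isGreatest_sSup_attainableValues c a k hr
  have htake := isGreatest_sSup_attainableValues c a k (sub_nonneg.mpr hk)
  rw [attainableValues_succ]
  exact (hskip.union (add_right_mono.map_isGreatest htake)).csSup_eq

end AttainableValues

theorem knapSubVal_rec_general {n : ℕ} (c a : Fin n → ℝ) (b : ℝ) (k : Fin n) (ξ : Fin n → Bool)
    (hξ : ξ k = false) (hfeas : tailSum n (k + 1) a ξ ≤ b) :
    (a k + tailSum n (k + 1) a ξ ≤ b →
      knapSubVal n c a b (k + 1) ξ =
        max (knapSubVal n c a b k ξ) (c k + knapSubVal n c a b k (upd n ξ k))) ∧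
    ((∀ j < k, 0 ≤ a j) → b < a k + tailSum n (k + 1) a ξ →
      knapSubVal n c a b (k + 1) ξ = knapSubVal n c a b k ξ) := by
  simp only [knapSubVal_eq_sSup_attainableValues, tailSum_upd, tailSum_eq_tailSum_succ a hξ,
    sub_add_eq_sub_sub_swap]
  refine ⟨fun hfit => ?_, fun ha hnot => ?_⟩
  · exact sSup_attainableValues_succ_of_le c (sub_nonneg.mpr hfeas) (le_sub_iff_add_le.mpr hfit)
  · rw [attainableValues_succ_of_lt c ha (sub_lt_iff_lt_add.mpr hnot)]

/-- For a knapsack instance `i = (c,a,b)` of dimension `n` with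
`a_j > 0`, `k ∈ {1,…,n}` and `ξ = (0,…,0,ξ_{k+1},…,ξ_n)` with `Σ_{j>k} a_j ξ_j ≤ b`:
`V*(k; i, ξ) = max{ V*(k−1; i, ξ), c_k + V*(k−1; i, ξ + e^k) }` if
`b ≥ a_k + Σ_{j>k} a_j ξ_j`, and `V*(k; i, ξ) = V*(k−1; i, ξ)` otherwise. -/
theorem knapSubVal_rec (n : ℕ) (c a : Fin n → ℝ) (b : ℝ) (ha : ∀ j, 0 < a j)
    (k : ℕ) (hk1 : 1 ≤ k) (hk2 : k ≤ n)
    (ξ : Fin n → Bool) (hξ : ∀ j : Fin n, j.val < k → ξ j = false)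
    (hfeas : tailSum n k a ξ ≤ b) :
    (a ⟨k - 1, by omega⟩ + tailSum n k a ξ ≤ b →
      knapSubVal n c a b k ξ =
        max (knapSubVal n c a b (k - 1) ξ)
            (c ⟨k - 1, by omega⟩ + knapSubVal n c a b (k - 1) (upd n ξ (k - 1)))) ∧
    (b < a ⟨k - 1, by omega⟩ + tailSum n k a ξ →
      knapSubVal n c a b k ξ = knapSubVal n c a b (k - 1) ξ) := by
  obtain ⟨m, rfl⟩ := Nat.exists_eq_add_of_le' hk1
  have hrec := knapSubVal_rec_general c a b ⟨m, hk2⟩ ξ (hξ _ m.lt_succ_self) hfeas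
  exact ⟨hrec.1, hrec.2 fun j _ => (ha j).le⟩
end

section
/- Let (G, w) be a weighted finite graph with nodes i_1 < ⋯ < i_k, and let V be any real-valued function on weighted subgraphs of (G, w) with V of the empty graph equal to 0. Then there exist nonnegative integer coefficients α_H, indexed by the nonempty weighted subgraphs (H, w_H) of (G, w), such that |V*(G,w) − V(G,w)| ≤ Σ_{H ⊆ G} α_H · |max{ V(H∖{i_H}, w_H∖{i_H}), w_{i_H} + V(H∖N(i_H), w_H∖N(i_H)) } − V(H, w_H)|, where i_H denotes the node of highest index belonging to H and N(i_H) is the closed neighborhood of i_H in H. -/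
/-- `indepVal G w s` is `V*(H, w_H)` for the weighted subgraph of `(G, w)` induced on
the node set `s`: the maximum of `Σ_{i∈S} w_i` over independent sets `S ⊆ s`
(the value of the empty graph is `0`). -/
noncomputable def indepVal {α : Type*} [Fintype α] [DecidableEq α]
    (G : SimpleGraph α) [DecidableRel G.Adj] (w : α → ℝ) (s : Finset α) : ℝ :=
  (s.powerset.filter (fun S => ∀ i ∈ S, ∀ j ∈ S, ¬ G.Adj i j)).sup'
    ⟨∅, by simp⟩ (fun S => ∑ i ∈ S, w i)

/-- `closedNbhd G i` is the closed neighborhood `N(i)` of `i`: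
`i` together with all nodes adjacent to `i`. -/
def closedNbhd {α : Type*} [Fintype α] [DecidableEq α]
    (G : SimpleGraph α) [DecidableRel G.Adj] (i : α) : Finset α :=
  insert i (Finset.univ.filter (fun j => G.Adj i j))

/-!
Splitting the independent sets according to whether they contain `i` shows that `V*` is a fixed
point of the Bellman step `V ↦ max {V(H∖{i}), w_i + V(H∖N(i))}`. As `max` is nonexpansive, the
error of `V` at `H` is at most the sum of its errors at `H∖{i}` and `H∖N(i)` plus the Bellman error
of `V` at `H`. Unfolding this bound down to the empty graph, `α_H` comes out as the number of times
`H` occurs in the recursion tree, which depends on neither `w` nor `V`.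
-/

theorem isIndepSet_iff_forall_not_adj {α : Type*} {G : SimpleGraph α} {S : Set α} :
    G.IsIndepSet S ↔ ∀ i ∈ S, ∀ j ∈ S, ¬ G.Adj i j :=
  ⟨fun hS _ hi _ hj hij ↦ hS hi hj hij.ne hij, fun hS i hi j hj _ ↦ hS i hi j hj⟩

section IndepVal

variable {α : Type*} [Fintype α] [DecidableEq α] {G : SimpleGraph α} [DecidableRel G.Adj]
  {w : α → ℝ} {s t S : Finset α} {i j : α}

theorem mem_closedNbhd : j ∈ closedNbhd G i ↔ j = i ∨ G.Adj i j := by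
  simp [closedNbhd]

theorem disjoint_closedNbhd_iff :
    Disjoint S (closedNbhd G i) ↔ i ∉ S ∧ ∀ j ∈ S, ¬ G.Adj i j := by
  simp only [Finset.disjoint_left, mem_closedNbhd]
  grind

theorem sdiff_closedNbhd_ssubset (hi : i ∈ s) : s \ closedNbhd G i ⊂ s :=
  Finset.ssubset_iff_subset_ne.2 ⟨Finset.sdiff_subset, fun h ↦
    Finset.disjoint_left.1 (Finset.sdiff_eq_self_iff_disjoint.1 h) hi (mem_closedNbhd.2 (.inl rfl))⟩

theorem indepVal_le_iff {x : ℝ} :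
    indepVal G w s ≤ x ↔ ∀ S ⊆ s, G.IsIndepSet (S : Set α) → ∑ i ∈ S, w i ≤ x := by
  rw [indepVal]
  refine (Finset.sup'_le_iff _ _).trans ?_
  simp only [Finset.mem_filter, Finset.mem_powerset, and_imp, isIndepSet_iff_forall_not_adj,
    Finset.mem_coe]

theorem sum_le_indepVal (hSs : S ⊆ s) (hS : G.IsIndepSet (S : Set α)) :
    ∑ i ∈ S, w i ≤ indepVal G w s :=
  indepVal_le_iff.1 le_rfl S hSs hS

theorem indepVal_empty : indepVal G w ∅ = 0 :=
  le_antisymm (indepVal_le_iff.2 fun S hS _ ↦ by simp [Finset.subset_empty.1 hS])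
    (sum_le_indepVal (S := ∅) subset_rfl (by simp))

theorem indepVal_mono (hst : s ⊆ t) : indepVal G w s ≤ indepVal G w t :=
  indepVal_le_iff.2 fun _ hSs ↦ sum_le_indepVal (hSs.trans hst)

theorem add_indepVal_sdiff_closedNbhd_le (hi : i ∈ s) :
    w i + indepVal G w (s \ closedNbhd G i) ≤ indepVal G w s := by
  rw [← le_sub_iff_add_le', indepVal_le_iff]
  intro S hSs hS
  obtain ⟨hSs, hSi⟩ := Finset.subset_sdiff.1 hSs
  obtain ⟨hiS, hadj⟩ := disjoint_closedNbhd_iff.1 hSi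
  rw [le_sub_iff_add_le', ← Finset.sum_insert hiS]
  refine sum_le_indepVal (Finset.insert_subset hi hSs) ?_
  rw [Finset.coe_insert]
  exact hS.insert fun j hj _ ↦ ⟨hadj j hj, fun hji ↦ hadj j hj hji.symm⟩

theorem indepVal_le_max :
    indepVal G w s ≤
      max (indepVal G w (s.erase i)) (w i + indepVal G w (s \ closedNbhd G i)) := by
  refine indepVal_le_iff.2 fun S hSs hS ↦ ?_
  by_cases hi : i ∈ S
  · have hdisj : Disjoint (S.erase i) (closedNbhd G i) :=
      disjoint_closedNbhd_iff.2 ⟨Finset.notMem_erase i S, fun j hj ↦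
        hS hi (Finset.mem_of_mem_erase hj) (Finset.ne_of_mem_erase hj).symm⟩
    have hsub : S.erase i ⊆ s \ closedNbhd G i :=
      Finset.subset_sdiff.2 ⟨(Finset.erase_subset i S).trans hSs, hdisj⟩
    rw [← Finset.add_sum_erase S w hi]
    refine le_max_of_le_right (add_le_add_right (sum_le_indepVal hsub ?_) _)
    exact hS.mono (Finset.coe_subset.2 (Finset.erase_subset i S))
  · exact le_max_of_le_left (sum_le_indepVal (Finset.subset_erase.2 ⟨hSs, hi⟩) hS)

end IndepVal

section Bellman

variable {α : Type*} [Fintype α] [DecidableEq α] (G : SimpleGraph α) [DecidableRel G.Adj]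
  (w : α → ℝ)

/-- The Bellman operator of the maximum weight independent set problem: the value assigned to the
subgraph on `H` by branching on the node `i` and evaluating the two remaining subgraphs by `V`. -/
def bellmanStep (V : Finset α → ℝ) (H : Finset α) (i : α) : ℝ :=
  max (V (H.erase i)) (w i + V (H \ closedNbhd G i))

variable {G w}

theorem bellmanStep_indepVal {s : Finset α} {i : α} (hi : i ∈ s) :
    bellmanStep G w (indepVal G w) s i = indepVal G w s :=
  le_antisymm
    (max_le (indepVal_mono (Finset.erase_subset i s)) (add_indepVal_sdiff_closedNbhd_le hi))
    indepVal_le_max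

theorem abs_bellmanStep_sub_bellmanStep_le (U V : Finset α → ℝ) (H : Finset α) (i : α) :
    |bellmanStep G w U H i - bellmanStep G w V H i| ≤
      max |U (H.erase i) - V (H.erase i)|
        |U (H \ closedNbhd G i) - V (H \ closedNbhd G i)| := by
  simpa only [bellmanStep, add_sub_add_left_eq_sub] using abs_max_sub_max_le_max (U (H.erase i))
    (w i + U (H \ closedNbhd G i)) (V (H.erase i)) (w i + V (H \ closedNbhd G i))

theorem abs_indepVal_sub_le (V : Finset α → ℝ) {s : Finset α} {i : α} (hi : i ∈ s) :
    |indepVal G w s - V s| ≤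
      |bellmanStep G w V s i - V s| +
        (|indepVal G w (s.erase i) - V (s.erase i)| +
          |indepVal G w (s \ closedNbhd G i) - V (s \ closedNbhd G i)|) :=
  calc |indepVal G w s - V s|
      ≤ |bellmanStep G w V s i - V s| +
          |bellmanStep G w (indepVal G w) s i - bellmanStep G w V s i| := by
        rw [bellmanStep_indepVal hi, add_comm]
        exact abs_sub_le _ _ _
    _ ≤ |bellmanStep G w V s i - V s| +
          (|indepVal G w (s.erase i) - V (s.erase i)| +
            |indepVal G w (s \ closedNbhd G i) - V (s \ closedNbhd G i)|) := by
        gcongr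
        exact (abs_bellmanStep_sub_bellmanStep_le _ V s i).trans
          (max_le_add_of_nonneg (abs_nonneg _) (abs_nonneg _))

end Bellman

section Branching

variable {α : Type*} [Fintype α] [DecidableEq α] (G : SimpleGraph α) [DecidableRel G.Adj]
  (pivot : ∀ H : Finset α, H.Nonempty → H)

/-- The nonempty node sets in the recursion tree that starts at `H` and branches each node set `K`
with pivot `i` into `K.erase i` and `K \ closedNbhd G i`, counted with multiplicity. The pivot is
returned as an element of the subtype `K`, which makes the recursion terminate. -/
def branchingTree (H : Finset α) : Multiset (Finset α) :=
  if h : H.Nonempty then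
    H ::ₘ (branchingTree (H.erase (pivot H h)) + branchingTree (H \ closedNbhd G (pivot H h)))
  else 0
termination_by H.card
decreasing_by
  · exact Finset.card_erase_lt_of_mem (pivot H h).2
  · exact Finset.card_lt_card (sdiff_closedNbhd_ssubset (pivot H h).2)

/-- The Bellman error of `V` at `H` when branching on the pivot; it is set to `0` at the empty
graph, which has no pivot. -/
noncomputable def bellmanError (w : α → ℝ) (V : Finset α → ℝ) (H : Finset α) : ℝ :=
  if h : H.Nonempty then |bellmanStep G w V H (pivot H h) - V H| else 0

variable {G pivot}

theorem subset_and_nonempty_of_mem_branchingTree {s H : Finset α}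
    (hH : H ∈ branchingTree G pivot s) : H ⊆ s ∧ H.Nonempty := by
  fun_induction branchingTree G pivot s with
  | case1 s hs ih_erase ih_sdiff =>
    rcases Multiset.mem_cons.1 hH with rfl | hH
    · exact ⟨subset_rfl, hs⟩
    rcases Multiset.mem_add.1 hH with hH | hH
    · exact (ih_erase hH).imp_left (·.trans (Finset.erase_subset _ _))
    · exact (ih_sdiff hH).imp_left (·.trans Finset.sdiff_subset)
  | case2 => exact absurd hH (Multiset.notMem_zero H)

theorem abs_indepVal_sub_le_sum_branchingTree (w : α → ℝ) {V : Finset α → ℝ} (hV : V ∅ = 0)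
    (s : Finset α) :
    |indepVal G w s - V s| ≤
      ((branchingTree G pivot s).map (bellmanError G pivot w V)).sum := by
  fun_induction branchingTree G pivot s with
  | case1 s hs ih_erase ih_sdiff =>
    rw [Multiset.map_cons, Multiset.sum_cons, Multiset.map_add, Multiset.sum_add, bellmanError,
      dif_pos hs]
    exact (abs_indepVal_sub_le V (pivot s hs).2).trans
      (add_le_add_right (add_le_add ih_erase ih_sdiff) _)
  | case2 s hs => simp [Finset.not_nonempty_iff_eq_empty.1 hs, indepVal_empty, hV]

end Branching

theorem indepVal_abs_sub_le_sum_general {α : Type*} [Fintype α] [DecidableEq α]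
    (G : SimpleGraph α) [DecidableRel G.Adj] (pivot : ∀ H : Finset α, H.Nonempty → H)
    (s : Finset α) :
    ∃ coeff : Finset α → ℕ, ∀ (w : α → ℝ) (V : Finset α → ℝ), V ∅ = 0 →
      |indepVal G w s - V s| ≤
        ∑ H ∈ (s.powerset.filter (fun H : Finset α => H.Nonempty)).attach,
          (coeff H.1 : ℝ) *
            |bellmanStep G w V H.1 (pivot H.1 (Finset.mem_filter.mp H.2).2) - V H.1| := by
  refine ⟨fun H ↦ (branchingTree G pivot s).count H, fun w V hV ↦ ?_⟩
  have tree_subset : (branchingTree G pivot s).toFinset ⊆ s.powerset.filter Finset.Nonempty := by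
    intro H hH
    rw [Finset.mem_filter, Finset.mem_powerset]
    exact subset_and_nonempty_of_mem_branchingTree (Multiset.mem_toFinset.1 hH)
  calc |indepVal G w s - V s|
      ≤ ((branchingTree G pivot s).map (bellmanError G pivot w V)).sum :=
        abs_indepVal_sub_le_sum_branchingTree w hV s
    _ = ∑ H ∈ s.powerset.filter Finset.Nonempty,
          ((branchingTree G pivot s).count H : ℝ) * bellmanError G pivot w V H := by
        simp only [Finset.sum_multiset_map_count, nsmul_eq_mul]
        refine Finset.sum_subset tree_subset fun H _ hH ↦ ?_
        rw [Multiset.count_eq_zero_of_notMem (mt Multiset.mem_toFinset.2 hH), Nat.cast_zero,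
          zero_mul]
    _ = _ := by
        rw [← Finset.sum_attach]
        refine Finset.sum_congr rfl fun H _ ↦ ?_
        rw [bellmanError, dif_pos (Finset.mem_filter.mp H.2).2]

/-- For a weighted finite graph `(G, w)` with node set `s` and any
real-valued function `V` on weighted subgraphs (identified with their node sets,
with `V(∅) = 0`), there exist nonnegative integer coefficients `α_H`, indexed by the
nonempty subgraphs `H ⊆ s`, such that
`|V*(G,w) − V(G,w)| ≤ Σ_H α_H · |max{ V(H∖{i_H}), w_{i_H} + V(H∖N(i_H)) } − V(H)|`,
where `i_H` is the node of highest index in `H`. -/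
theorem indepVal_abs_sub_le_sum {α : Type*} [Fintype α] [LinearOrder α]
    (G : SimpleGraph α) [DecidableRel G.Adj] (w : α → ℝ)
    (V : Finset α → ℝ) (hV : V ∅ = 0) (s : Finset α) :
    ∃ coeff : Finset α → ℕ,
      |indepVal G w s - V s| ≤
        ∑ H ∈ (s.powerset.filter (fun H : Finset α => H.Nonempty)).attach,
          (coeff H.1 : ℝ) *
            |max (V (H.1.erase (H.1.max' (Finset.mem_filter.mp H.2).2)))
                 (w (H.1.max' (Finset.mem_filter.mp H.2).2) +
                   V (H.1 \ closedNbhd G (H.1.max' (Finset.mem_filter.mp H.2).2))) -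
             V H.1| := by
  obtain ⟨coeff, h⟩ :=
    indepVal_abs_sub_le_sum_general G (fun H hH ↦ ⟨H.max' hH, H.max'_mem hH⟩) s
  exact ⟨coeff, h w V hV⟩
end
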